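/- Let K be a field of characteristic zero, let f, g ∈ K[x] be monic polynomials of the same degree n ≥ 1, and let A ∈ K[x₁,x₂] be a divisor of f(x₁) − g(x₂) which, regarded as a polynomial in x₁ with coefficients in K[x₂], is monic of degree d ≥ 1. Write A = x₁^d + Σ_{i=1}^{d} (−1)^i s_i(x₂)·x₁^{d−i} with s_i ∈ K[x₂]. Then the total degree of A equals d, and for each 1 ≤ i ≤ d the polynomial s_i has degree at most i in x₂. -/

import Mathlib

/-!
Order the monomials of `K[x₁,x₂]` by degree, ties being broken lexicographically with `x₁ > x₂`.
As `f` and `g` have degree `n` and `f` is monic, the leading monomial of `f(x₁) - g(x₂)` is `x₁ ^ n`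
(`degree_aeval_sub_aeval`). Leading monomials multiply, so the leading monomial of the divisor `A`
divides `x₁ ^ n`, i.e. it is a power `x₁ ^ a`, and `a` is the total degree of `A` since the order is
graded. Now `a ≤ d` because `A` has degree `d` in `x₁`, and `d ≤ a` because `x₁ ^ d` occurs in `A`
with coefficient `1`. So `A` has total degree `d`; the monomial `x₁ ^ (d - i) * x₂ ^ deg sᵢ`
occurs in `A` unless `sᵢ = 0`, which gives `deg sᵢ ≤ i`.
-/

open MvPolynomial in
theorem coeff_aeval_X_mul_X_pow {K : Type*} [Field K] {a b : Fin 2} (hab : a ≠ b)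
    (p : Polynomial K) (k : ℕ) (m : Fin 2 →₀ ℕ) :
    coeff m (Polynomial.aeval (X b : MvPolynomial (Fin 2) K) p * X a ^ k)
      = if m a = k then p.coeff (m b) else 0 := by
  induction p using Polynomial.induction_on' with
  | add p q hp hq =>
    rw [map_add, add_mul, coeff_add, hp, hq, Polynomial.coeff_add]
    split_ifs <;> simp
  | monomial j c =>
    have h : Polynomial.aeval (X b : MvPolynomial (Fin 2) K) (Polynomial.monomial j c) * X a ^ k
        = monomial (Finsupp.single b j + Finsupp.single a k) c := by
      rw [Polynomial.aeval_monomial, X_pow_eq_monomial, X_pow_eq_monomial, algebraMap_eq,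
        C_mul_monomial, monomial_mul, mul_one, mul_one]
    have h2 : Finsupp.single b j + Finsupp.single a k = m ↔ m a = k ∧ j = m b := by
      rw [Finsupp.ext_iff, Fin.forall_fin_two]
      fin_cases a <;> fin_cases b <;> simp_all <;> grind
    rw [h, coeff_monomial, Polynomial.coeff_monomial]
    simp only [h2]
    split_ifs <;> simp_all

open MvPolynomial MonomialOrder in
/-- The leading monomial of `f(x₁) - g(x₂)` for the graded lexicographic order is `x₁ ^ n`. -/
theorem degree_aeval_sub_aeval {K : Type*} [Field K] {n : ℕ} (hn : 1 ≤ n)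
    {f g : Polynomial K} (hf : f.Monic) (hfdeg : f.natDegree = n) (hgdeg : g.natDegree = n) :
    degLex.degree (Polynomial.aeval (X 0 : MvPolynomial (Fin 2) K) f
      - Polynomial.aeval (X 1 : MvPolynomial (Fin 2) K) g) = Finsupp.single 0 n := by
  have hc : ∀ m : Fin 2 →₀ ℕ, coeff m (Polynomial.aeval (X 0 : MvPolynomial (Fin 2) K) f
      - Polynomial.aeval (X 1 : MvPolynomial (Fin 2) K) g)
      = (if m 1 = 0 then f.coeff (m 0) else 0) - if m 0 = 0 then g.coeff (m 1) else 0 := by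
    intro m
    rw [coeff_sub, ← coeff_aeval_X_mul_X_pow (by decide), ← coeff_aeval_X_mul_X_pow (by decide)]
    simp
  have h10 : Finsupp.single (1 : Fin 2) n ≼[degLex] Finsupp.single 0 n := by
    have h : Finsupp.single (1 : Fin 2) 1 ≼[degLex] Finsupp.single 0 1 :=
      degLex_single_le_iff.2 (by decide)
    have h' := nsmul_le_nsmul_right h n
    rw [← map_nsmul, ← map_nsmul] at h'
    simpa using h'
  apply degLex.toSyn.injective
  apply le_antisymm
  · rw [degree_le_iff]
    intro m hm
    rw [mem_support_iff, hc] at hm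
    by_cases h1 : m 1 = 0 ∧ f.coeff (m 0) ≠ 0
    · apply degLex.toSyn_monotone
      have := Polynomial.le_natDegree_of_ne_zero h1.2
      rw [Finsupp.le_def, Fin.forall_fin_two]
      simpa [h1.1, hfdeg] using this
    · refine le_trans (degLex.toSyn_monotone ?_) h10
      have h2 : m 0 = 0 ∧ g.coeff (m 1) ≠ 0 := by
        by_contra h2
        apply hm
        grind
      have := Polynomial.le_natDegree_of_ne_zero h2.2
      rw [Finsupp.le_def, Fin.forall_fin_two]
      simpa [h2.1, hgdeg] using this
  · apply le_degree
    rw [mem_support_iff, hc]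
    have : f.coeff n = 1 := hfdeg ▸ hf
    simp [this, show n ≠ 0 by omega]

/-- Let `K` be a field of characteristic zero, `f, g ∈ K[x]` monic
of the same degree `n ≥ 1`, and let `A ∈ K[x₁,x₂]` divide `f(x₁) − g(x₂)`.  Suppose
that, regarded as a polynomial in `x₁` over `K[x₂]`, `A` is monic of degree `d ≥ 1`,
say `A = x₁^d + Σ_{i=1}^d (−1)^i sᵢ(x₂) x₁^{d−i}` with `sᵢ ∈ K[x₂]`.  Then the total
degree of `A` equals `d`, and `deg sᵢ ≤ i` for each `1 ≤ i ≤ d`. -/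
theorem totalDegree_eq_and_coeff_degree_le_of_dvd_sub
    {K : Type*} [Field K] [CharZero K] (n d : ℕ) (hn : 1 ≤ n) (hd : 1 ≤ d)
    (f g : Polynomial K) (hf : f.Monic) (hg : g.Monic)
    (hfdeg : f.natDegree = n) (hgdeg : g.natDegree = n)
    (A : MvPolynomial (Fin 2) K) (s : ℕ → Polynomial K)
    (hA : A = MvPolynomial.X 0 ^ d
        + ∑ i ∈ Finset.Icc 1 d,
            (-1 : MvPolynomial (Fin 2) K) ^ i
              * Polynomial.aeval (MvPolynomial.X 1 : MvPolynomial (Fin 2) K) (s i)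
              * MvPolynomial.X 0 ^ (d - i))
    (hdvd : A ∣ Polynomial.aeval (MvPolynomial.X 0 : MvPolynomial (Fin 2) K) f
        - Polynomial.aeval (MvPolynomial.X 1 : MvPolynomial (Fin 2) K) g) :
    A.totalDegree = d ∧ ∀ i ∈ Finset.Icc 1 d, (s i).natDegree ≤ i := by
  have hc : ∀ m : Fin 2 →₀ ℕ, A.coeff m = (if m 0 = d ∧ m 1 = 0 then 1 else 0)
      + ∑ i ∈ Finset.Icc 1 d, (-1) ^ i * if m 0 = d - i then (s i).coeff (m 1) else 0 := by
    intro m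
    rw [hA, MvPolynomial.coeff_add, MvPolynomial.coeff_sum]
    congr 1
    · have := coeff_aeval_X_mul_X_pow (a := 0) (b := 1) (by decide) (1 : Polynomial K) d m
      rw [map_one, one_mul] at this
      rw [this, Polynomial.coeff_one]
      split_ifs <;> simp_all
    · refine Finset.sum_congr rfl fun i _ => ?_
      rw [← coeff_aeval_X_mul_X_pow (by decide), mul_assoc, ← MvPolynomial.coeff_C_mul]
      simp
  obtain ⟨B, hB⟩ := hdvd
  have hdeg := degree_aeval_sub_aeval hn hf hfdeg hgdeg
  have hAB : A * B ≠ 0 := by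
    intro h
    rw [hB, h, MonomialOrder.degree_zero] at hdeg
    have := DFunLike.congr_fun hdeg 0
    simp at this
    omega
  have hA0 := left_ne_zero_of_mul hAB
  rw [hB, MonomialOrder.degree_mul hA0 (right_ne_zero_of_mul hAB)] at hdeg
  have hlead1 : MonomialOrder.degLex.degree A 1 = 0 := by
    have := DFunLike.congr_fun hdeg 1
    simp at this
    exact this.1
  have htot : A.totalDegree = MonomialOrder.degLex.degree A 0 := by
    rw [← MvPolynomial.degree_degLexDegree, Finsupp.degree_eq_sum, Fin.sum_univ_two, hlead1,
      add_zero]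
  have hle : A.totalDegree ≤ d := by
    by_contra! hlt
    rw [htot] at hlt
    apply MonomialOrder.degLex.coeff_degree_ne_zero_iff.2 hA0
    rw [hc, if_neg (by omega), zero_add]
    exact Finset.sum_eq_zero fun i _ => by rw [if_neg (by omega), mul_zero]
  have hbound : ∀ m : Fin 2 →₀ ℕ, A.coeff m ≠ 0 → m 0 + m 1 ≤ A.totalDegree := by
    intro m hm
    have := MvPolynomial.le_totalDegree (MvPolynomial.mem_support_iff.2 hm)
    rwa [Finsupp.sum_fintype _ _ fun _ => rfl, Fin.sum_univ_two] at this
  refine ⟨le_antisymm hle ?_, fun i hi => ?_⟩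
  · have := hbound (Finsupp.single 0 d) (by
      rw [hc, Finset.sum_eq_zero]
      · simp
      · intro i hi
        rw [Finset.mem_Icc] at hi
        rw [if_neg (by simp; omega), mul_zero])
    simpa using this
  · by_cases hs : s i = 0
    · simp [hs]
    rw [Finset.mem_Icc] at hi
    have := hbound (Finsupp.single 0 (d - i) + Finsupp.single 1 (s i).natDegree) (by
      rw [hc, if_neg (by simp; omega), zero_add, Finset.sum_eq_single i]
      · simp [hs]
      · intro j hj hji
        rw [Finset.mem_Icc] at hj
        rw [if_neg (by simp; omega), mul_zero]
      · intro h
        exact absurd (Finset.mem_Icc.2 hi) h)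
    simp at this
    omega
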